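/- arXiv:2011.13977 — 2 statements merged into one kernel-verified Lean document; each statement's English description precedes it below -/
import Mathlib

section
/- Let X be one of the properties: Pareto optimal, rank-maximal, max-cardinality rank-maximal, fair. There exist a constant c > 0 and n_0 such that for every n ≥ n_0 the following holds: for every family, indexed by instances I with n agents and n objects, of pairs (T_I, f_I) — where T_I assigns to each pair (a_i, h_j) a threshold T_I(a_i, h_j) ∈ [0,1] and f_I maps {0,1}-valued n×n answer matrices to matchings of G_I — such that f_I(b_v) satisfies X for every instance I and every unit-range valuation profile v consistent with I (where b_v(i,j) = 1 iff v_i(h_j) ≥ T_I(a_i, h_j)), there exist an instance I with n agents and n objects and a unit-range valuation profile v consistent with I such that max{SW(μ' | v) : μ' a matching of G_I satisfying X} ≥ c·√n·SW(f_I(b_v) | v). -/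
open Finset
open scoped Classical

/-- A one-sided matching instance with `n` agents and `n` objects.  Agent `i` has a
nonempty acceptable set `accept i` and a weak order `pref i` on it
(`pref i h h'` means agent `i` weakly prefers object `h` to object `h'`). -/
structure OSMInstance (n : ℕ) where
  accept : Fin n → Finset (Fin n)
  accept_nonempty : ∀ i, (accept i).Nonempty
  pref : Fin n → Fin n → Fin n → Prop
  pref_refl : ∀ i h, h ∈ accept i → pref i h h
  pref_trans : ∀ i h₁ h₂ h₃, h₁ ∈ accept i → h₂ ∈ accept i → h₃ ∈ accept i →
    pref i h₁ h₂ → pref i h₂ h₃ → pref i h₁ h₃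
  pref_total : ∀ i h₁ h₂, h₁ ∈ accept i → h₂ ∈ accept i → pref i h₁ h₂ ∨ pref i h₂ h₁

namespace OSMInstance

variable {n : ℕ}

/-- Agent `i` strictly prefers object `h` to object `h'`. -/
def strictPref (I : OSMInstance n) (i h h' : Fin n) : Prop :=
  I.pref i h h' ∧ ¬ I.pref i h' h

/-- The rank of the edge `(i, h)` of `G_I`: one plus the number of acceptable objects
that agent `i` strictly prefers to `h`. -/
noncomputable def edgeRank (I : OSMInstance n) (e : Fin n × Fin n) : ℕ :=
  ((I.accept e.1).filter (fun h' => I.strictPref e.1 h' e.2)).card + 1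

/-- A matching of `G_I`: a set of acceptable (agent, object) pairs in which every agent
and every object occurs at most once. -/
def IsMatching (I : OSMInstance n) (μ : Finset (Fin n × Fin n)) : Prop :=
  (∀ e ∈ μ, e.2 ∈ I.accept e.1) ∧
  (∀ e ∈ μ, ∀ e' ∈ μ, e.1 = e'.1 → e = e') ∧
  (∀ e ∈ μ, ∀ e' ∈ μ, e.2 = e'.2 → e = e')

/-- Total weight of a set of edges under the edge weights `w`. -/
def weightSum (w : Fin n × Fin n → ℝ) (μ : Finset (Fin n × Fin n)) : ℝ :=
  ∑ e ∈ μ, w e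

/-- Social welfare of the set of edges `μ` under the valuation profile `v`. -/
def SW (_I : OSMInstance n) (v : Fin n → Fin n → ℝ) (μ : Finset (Fin n × Fin n)) : ℝ :=
  ∑ e ∈ μ, v e.1 e.2

/-- `μ` is a maximum-weight matching of `G_I` with respect to edge weights `w`. -/
def IsMaxWeightMatching (I : OSMInstance n) (w : Fin n × Fin n → ℝ)
    (μ : Finset (Fin n × Fin n)) : Prop :=
  I.IsMatching μ ∧ ∀ μ', I.IsMatching μ' → weightSum w μ' ≤ weightSum w μ

/-- `μ` is a priority-`p` matching: a maximum-weight matching when every rank-`r` edge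
gets weight `p r`. -/
noncomputable def IsPriorityMatching (I : OSMInstance n) (p : ℕ → ℝ)
    (μ : Finset (Fin n × Fin n)) : Prop :=
  I.IsMaxWeightMatching (fun e => p (I.edgeRank e)) μ

/-- `v` is a valuation profile consistent with the instance: values lie in `[0,1]`,
unacceptable objects have value `0`, and on acceptable objects the values represent
the weak order. -/
def Consistent (I : OSMInstance n) (v : Fin n → Fin n → ℝ) : Prop :=
  (∀ i h, 0 ≤ v i h ∧ v i h ≤ 1) ∧
  (∀ i h, h ∉ I.accept i → v i h = 0) ∧
  (∀ i h h', h ∈ I.accept i → h' ∈ I.accept i → (I.pref i h h' ↔ v i h' ≤ v i h))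

/-- Unit-sum valuations: each agent's values over acceptable objects sum to `1`. -/
def UnitSum (I : OSMInstance n) (v : Fin n → Fin n → ℝ) : Prop :=
  ∀ i, ∑ h ∈ I.accept i, v i h = 1

/-- Unit-range valuations: each agent values some acceptable object `1`, some
acceptable object `0`, and has two non-equivalent acceptable objects. -/
def UnitRange (I : OSMInstance n) (v : Fin n → Fin n → ℝ) : Prop :=
  ∀ i, (∃ h ∈ I.accept i, v i h = 1) ∧ (∃ h ∈ I.accept i, v i h = 0) ∧
    ∃ h ∈ I.accept i, ∃ h' ∈ I.accept i, I.strictPref i h h'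

/-- Agent `i` is unmatched in `μ`. -/
def Unmatched (_I : OSMInstance n) (μ : Finset (Fin n × Fin n)) (i : Fin n) : Prop :=
  ∀ h, (i, h) ∉ μ

/-- Agent `i` weakly prefers their allocation in `μ'` to their allocation in `μ`
(being unmatched is strictly worse than receiving any acceptable object). -/
def WeakImprove (I : OSMInstance n) (μ' μ : Finset (Fin n × Fin n)) (i : Fin n) : Prop :=
  I.Unmatched μ i ∨ ∃ h h', (i, h) ∈ μ ∧ (i, h') ∈ μ' ∧ I.pref i h' h

/-- Agent `i` strictly prefers their allocation in `μ'` to their allocation in `μ`. -/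
def StrictImprove (I : OSMInstance n) (μ' μ : Finset (Fin n × Fin n)) (i : Fin n) : Prop :=
  (I.Unmatched μ i ∧ ∃ h', (i, h') ∈ μ') ∨
    ∃ h h', (i, h) ∈ μ ∧ (i, h') ∈ μ' ∧ I.strictPref i h' h

/-- `μ` is a Pareto optimal matching of `G_I`. -/
def ParetoOptimal (I : OSMInstance n) (μ : Finset (Fin n × Fin n)) : Prop :=
  I.IsMatching μ ∧
    ¬ ∃ μ', I.IsMatching μ' ∧ (∀ i, I.WeakImprove μ' μ i) ∧ ∃ i, I.StrictImprove μ' μ i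

/-- `sig I μ r` is the number of rank-`r` edges of `μ` (as an integer). -/
noncomputable def sig (I : OSMInstance n) (μ : Finset (Fin n × Fin n)) (r : ℕ) : ℤ :=
  ((μ.filter (fun e => I.edgeRank e = r)).card : ℤ)

end OSMInstance

/-- Lexicographic comparison `f ≤ g` of the length-`len` tuples `(f 0, …, f (len-1))`
and `(g 0, …, g (len-1))`. -/
def LexLe (len : ℕ) (f g : ℕ → ℤ) : Prop :=
  (∀ j < len, f j = g j) ∨ ∃ j < len, (∀ i < j, f i = g i) ∧ f j < g j

namespace OSMInstance

variable {n : ℕ}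

/-- `μ` is a rank-maximal matching: it lexicographically maximizes `(s_1, …, s_n)`. -/
noncomputable def RankMaximal (I : OSMInstance n) (μ : Finset (Fin n × Fin n)) : Prop :=
  I.IsMatching μ ∧ ∀ μ', I.IsMatching μ' →
    LexLe n (fun j => I.sig μ' (j + 1)) (fun j => I.sig μ (j + 1))

/-- `μ` is a max-cardinality rank-maximal matching: it lexicographically maximizes
`(Σ_i s_i, s_1, …, s_n)`. -/
noncomputable def MaxCardRankMaximal (I : OSMInstance n) (μ : Finset (Fin n × Fin n)) : Prop :=
  I.IsMatching μ ∧ ∀ μ', I.IsMatching μ' →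
    LexLe (n + 1) (fun j => if j = 0 then (μ'.card : ℤ) else I.sig μ' j)
      (fun j => if j = 0 then (μ.card : ℤ) else I.sig μ j)

/-- `μ` is a fair matching: it lexicographically maximizes
`(Σ_i s_i, -s_n, -s_(n-1), …, -s_1)`. -/
noncomputable def FairMatching (I : OSMInstance n) (μ : Finset (Fin n × Fin n)) : Prop :=
  I.IsMatching μ ∧ ∀ μ', I.IsMatching μ' →
    LexLe (n + 1) (fun j => if j = 0 then (μ'.card : ℤ) else -I.sig μ' (n + 1 - j))
      (fun j => if j = 0 then (μ.card : ℤ) else -I.sig μ (n + 1 - j))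

end OSMInstance

/-- The priority vector for rank-maximal matchings: a rank-`r` edge gets weight
`n ^ (2 * (n - r + 1))`. -/
noncomputable def pRankMaximal (n : ℕ) : ℕ → ℝ :=
  fun r => (n : ℝ) ^ (2 * (n - r + 1))

/-- The priority vector for max-cardinality rank-maximal matchings: a rank-`r` edge gets
weight `n ^ (2 * n) + n ^ (2 * (n - r))`. -/
noncomputable def pMaxCardRankMaximal (n : ℕ) : ℕ → ℝ :=
  fun r => (n : ℝ) ^ (2 * n) + (n : ℝ) ^ (2 * (n - r))

/-- The priority vector for fair matchings: a rank-`r` edge gets weight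
`4 * n ^ (2 * n) - 2 * n ^ (r - 1)`. -/
noncomputable def pFairVec (n : ℕ) : ℕ → ℝ :=
  fun r => 4 * (n : ℝ) ^ (2 * n) - 2 * (n : ℝ) ^ (r - 1)

/-- The set `𝕡` of the three priority vectors of interest. -/
noncomputable def PrioritySet (n : ℕ) : Set (ℕ → ℝ) :=
  {pRankMaximal n, pMaxCardRankMaximal n, pFairVec n}

/-- The four matching properties considered: Pareto optimal, rank-maximal,
max-cardinality rank-maximal, and fair. -/
inductive MatchProp where
  | po | rm | mcrm | fair

/-- `μ` satisfies the property `X` with respect to the instance `I`. -/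
noncomputable def SatisfiesProp {n : ℕ} (X : MatchProp) (I : OSMInstance n)
    (μ : Finset (Fin n × Fin n)) : Prop :=
  match X with
  | .po => I.ParetoOptimal μ
  | .rm => I.RankMaximal μ
  | .mcrm => I.MaxCardRankMaximal μ
  | .fair => I.FairMatching μ

/-- A pointwise inequality of tuples implies the lexicographic one. -/
theorem LexLe.of_le {len : ℕ} {f g : ℕ → ℤ} (h : ∀ j, f j ≤ g j) : LexLe len f g := by
  by_cases hall : ∀ j < len, f j = g j
  · exact Or.inl hall
  · have hex : ∃ j, j < len ∧ f j ≠ g j := by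
      push Not at hall
      exact hall
    refine Or.inr ⟨Nat.find hex, (Nat.find_spec hex).1, fun i hi => ?_,
      lt_of_le_of_ne (h _) (Nat.find_spec hex).2⟩
    by_contra hne
    exact Nat.find_min hex hi ⟨hi.trans (Nat.find_spec hex).1, hne⟩

namespace OSMInstance

variable {n : ℕ}

/-- When the rank of an edge is a function of its object, the signature of a matching counts
the matched objects. -/
theorem sig_eq_card_image {I : OSMInstance n} {rk : Fin n → ℕ}
    (hrk : ∀ i, ∀ h ∈ I.accept i, I.edgeRank (i, h) = rk h)
    {μ : Finset (Fin n × Fin n)} (hμ : I.IsMatching μ) (r : ℕ) :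
    I.sig μ r = (((μ.image Prod.snd).filter (fun h => rk h = r)).card : ℤ) := by
  have hfilter : (μ.image Prod.snd).filter (fun h => rk h = r) =
      (μ.filter (fun e => I.edgeRank e = r)).image Prod.snd := by
    ext h
    simp only [mem_filter, mem_image]
    constructor
    · rintro ⟨⟨e, he, rfl⟩, hr⟩
      exact ⟨e, ⟨he, (hrk e.1 e.2 (hμ.1 e he)).trans hr⟩, rfl⟩
    · rintro ⟨e, ⟨he, hr⟩, rfl⟩
      exact ⟨⟨e, he, rfl⟩, (hrk e.1 e.2 (hμ.1 e he)).symm.trans hr⟩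
  rw [hfilter, card_image_of_injOn]
  · rfl
  · intro e he e' he' heq
    simp only [coe_filter, Set.mem_ofPred_eq] at he he'
    exact hμ.2.2 e he.1 e' he'.1 heq

theorem IsMatching.card_image_snd {I : OSMInstance n} {μ : Finset (Fin n × Fin n)}
    (hμ : I.IsMatching μ) : (μ.image Prod.snd).card = μ.card :=
  card_image_of_injOn fun e he e' he' heq => hμ.2.2 e he e' he' heq

/-- A matching covering every acceptable object is Pareto optimal when the preferences of all
agents are given by a common level function on objects, injective on each acceptable set. -/
theorem paretoOptimal_of_covering {I : OSMInstance n} {lev : Fin n → ℕ}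
    (hpref : ∀ i h h', I.pref i h h' ↔ lev h' ≤ lev h)
    (hinj : ∀ i, ∀ h ∈ I.accept i, ∀ h' ∈ I.accept i, lev h = lev h' → h = h')
    {μ : Finset (Fin n × Fin n)} (hμ : I.IsMatching μ)
    (hcov : ∀ i, ∀ h ∈ I.accept i, ∃ a, (a, h) ∈ μ) : I.ParetoOptimal μ := by
  refine ⟨hμ, ?_⟩
  rintro ⟨ν, hν, hweak, i, hstrict⟩
  obtain ⟨B, hB⟩ : ∃ B, ∀ h, lev h ≤ B :=
    ⟨univ.sup lev, fun h => le_sup (f := lev) (mem_univ h)⟩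
  have hkeep : ∀ d h a, B - lev h = d → (a, h) ∈ μ → (a, h) ∈ ν := by
    intro d
    induction d using Nat.strong_induction_on with
    | _ d ih =>
      intro h a hd ha
      rcases hweak a with hun | ⟨g, g', hg, hg', hle⟩
      · exact absurd ha (hun h)
      have hgh : g = h := congrArg Prod.snd (hμ.2.1 _ hg _ ha rfl)
      subst hgh
      rw [hpref] at hle
      rcases hle.eq_or_lt with heq | hlt
      · rwa [hinj a g (hμ.1 _ hg) g' (hν.1 _ hg') heq]
      · obtain ⟨b, hb⟩ := hcov a g' (hν.1 _ hg')
        have hb' := ih (B - lev g') (by have := hB g'; omega) g' b rfl hb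
        have hab : b = a := congrArg Prod.fst (hν.2.2 _ hb' _ hg' rfl)
        subst hab
        have hgg : g = g' := congrArg Prod.snd (hμ.2.1 _ hg _ hb rfl)
        subst hgg
        exact absurd hlt (lt_irrefl _)
  rcases hstrict with ⟨hun, h', hh'⟩ | ⟨h, h', hh, hh', hlt⟩
  · obtain ⟨b, hb⟩ := hcov i h' (hν.1 _ hh')
    have hbi : b = i := congrArg Prod.fst (hν.2.2 _ (hkeep _ _ _ rfl hb) _ hh' rfl)
    subst hbi
    exact hun _ hb
  · have heq : h = h' := congrArg Prod.snd (hν.2.1 _ (hkeep _ _ _ rfl hh) _ hh' rfl)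
    subst heq
    exact hlt.2 hlt.1

/-- A matching covering every acceptable object has all four properties when preferences and
ranks are determined by the objects. -/
theorem satisfiesProp_of_covering (X : MatchProp) {I : OSMInstance n} {lev rk : Fin n → ℕ}
    (hpref : ∀ i h h', I.pref i h h' ↔ lev h' ≤ lev h)
    (hinj : ∀ i, ∀ h ∈ I.accept i, ∀ h' ∈ I.accept i, lev h = lev h' → h = h')
    (hrk : ∀ i, ∀ h ∈ I.accept i, I.edgeRank (i, h) = rk h)
    {μ : Finset (Fin n × Fin n)} (hμ : I.IsMatching μ)
    (hcov : ∀ i, ∀ h ∈ I.accept i, ∃ a, (a, h) ∈ μ) : SatisfiesProp X I μ := by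
  have hsub : ∀ ν, I.IsMatching ν → ν.image Prod.snd ⊆ μ.image Prod.snd := by
    intro ν hν h hh
    obtain ⟨e, he, rfl⟩ := mem_image.1 hh
    obtain ⟨a, ha⟩ := hcov e.1 e.2 (hν.1 e he)
    exact mem_image.2 ⟨_, ha, rfl⟩
  have hsig : ∀ ν, I.IsMatching ν → ∀ r, I.sig ν r ≤ I.sig μ r := by
    intro ν hν r
    rw [sig_eq_card_image hrk hν, sig_eq_card_image hrk hμ]
    exact_mod_cast card_le_card (filter_subset_filter _ (hsub ν hν))
  have hcard : ∀ ν, I.IsMatching ν → ν.card ≤ μ.card := by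
    intro ν hν
    rw [← hν.card_image_snd, ← hμ.card_image_snd]
    exact card_le_card (hsub ν hν)
  cases X with
  | po => exact paretoOptimal_of_covering hpref hinj hμ hcov
  | rm => exact ⟨hμ, fun ν hν => LexLe.of_le fun j => hsig ν hν _⟩
  | mcrm =>
    refine ⟨hμ, fun ν hν => LexLe.of_le fun j => ?_⟩
    by_cases hj : j = 0
    · simpa [hj] using hcard ν hν
    · simpa [hj] using hsig ν hν j
  | fair =>
    refine ⟨hμ, fun ν hν => ?_⟩
    rcases (hcard ν hν).eq_or_lt with heq | hlt
    · have himage : ν.image Prod.snd = μ.image Prod.snd :=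
        eq_of_subset_of_card_le (hsub ν hν)
          (by rw [hν.card_image_snd, hμ.card_image_snd, heq])
      refine Or.inl fun j _ => ?_
      simp only [heq, sig_eq_card_image hrk hν, sig_eq_card_image hrk hμ, himage]
    · exact Or.inr ⟨0, by omega, fun i hi => absurd hi (Nat.not_lt_zero i), by simpa using hlt⟩

end OSMInstance

theorem SatisfiesProp.isMatching {n : ℕ} {X : MatchProp} {I : OSMInstance n}
    {μ : Finset (Fin n × Fin n)} (h : SatisfiesProp X I μ) : I.IsMatching μ := by
  cases X <;> exact h.1

/-- The block of agent `i`: consecutive triples of agents form the blocks `0, …, m - 1`, and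
the surplus agents join the last block. -/
def agentBlock (m i : ℕ) : ℕ := min (i / 3) (m - 1)

/-- The level of object `h`: the object `m` is everyone's favourite, the objects below `m` are
the middle objects of the blocks, and `m + 1` is everyone's worst acceptable object. -/
def objectLevel (m h : ℕ) : ℕ := if h = m then 2 else if h < m then 1 else 0

/-- The block instance: agent `i` accepts exactly the common favourite `m`, the middle object of
her block, and the common worst object `m + 1`, in this strict order. -/
def blockInstance (n m : ℕ) (hmn : m < n) : OSMInstance n where
  accept i := univ.filter fun h => h.val = m ∨ h.val = m + 1 ∨ h.val = agentBlock m i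
  accept_nonempty i := ⟨⟨m, hmn⟩, by simp⟩
  pref _ h h' := objectLevel m h' ≤ objectLevel m h
  pref_refl _ _ _ := le_rfl
  pref_trans _ _ _ _ _ _ _ h₁ h₂ := h₂.trans h₁
  pref_total _ _ _ _ _ := le_total _ _

/-- The profile on the block instance in which agent `i` has value `w i` for the middle object
of her block. -/
noncomputable def blockProfile {n : ℕ} (m : ℕ) (w : Fin n → ℝ) (i h : Fin n) : ℝ :=
  if h.val = m then 1 else if h.val = agentBlock m i then w i else 0

theorem agentBlock_lt {m : ℕ} (hm : 0 < m) (i : ℕ) : agentBlock m i < m := by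
  unfold agentBlock
  omega

section BlockInstance

variable {n m : ℕ} (hmn : m < n)

theorem mem_accept_blockInstance {i h : Fin n} :
    h ∈ (blockInstance n m hmn).accept i ↔
      h.val = m ∨ h.val = m + 1 ∨ h.val = agentBlock m i := by
  simp [blockInstance]

theorem pref_blockInstance {i h h' : Fin n} :
    (blockInstance n m hmn).pref i h h' ↔ objectLevel m h' ≤ objectLevel m h :=
  Iff.rfl

theorem objectLevel_inj_on_accept (hm : 0 < m) {i h h' : Fin n}
    (hh : h ∈ (blockInstance n m hmn).accept i) (hh' : h' ∈ (blockInstance n m hmn).accept i)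
    (heq : objectLevel m h = objectLevel m h') : h = h' := by
  rw [mem_accept_blockInstance] at hh hh'
  have := agentBlock_lt hm i
  unfold objectLevel at heq
  ext
  grind

theorem edgeRank_blockInstance (hm : 0 < m) {i h : Fin n}
    (hh : h ∈ (blockInstance n m hmn).accept i) :
    (blockInstance n m hmn).edgeRank (i, h) = 3 - objectLevel m h := by
  have hb := agentBlock_lt hm i
  rw [mem_accept_blockInstance] at hh
  have hstrict : ∀ h', (blockInstance n m hmn).strictPref i h' h ↔
      objectLevel m h < objectLevel m h' := by
    intro h'
    simp only [OSMInstance.strictPref, pref_blockInstance]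
    omega
  have key : ∀ S : Finset (Fin n), (∀ h', h' ∈ S ↔ h' ∈ (blockInstance n m hmn).accept i ∧
      objectLevel m h < objectLevel m h') →
      (blockInstance n m hmn).edgeRank (i, h) = S.card + 1 := by
    intro S hS
    unfold OSMInstance.edgeRank
    congr 2
    ext h'
    rw [mem_filter, hS, hstrict]
  rcases hh with hh | hh | hh
  · rw [key ∅]
    · simp [objectLevel, hh]
    · intro h'
      simp only [mem_accept_blockInstance, objectLevel, notMem_empty]
      grind
  · rw [key {⟨m, hmn⟩, ⟨agentBlock m i, hb.trans hmn⟩}]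
    · rw [card_pair (by simp; omega)]
      simp [objectLevel, hh]
    · intro h'
      simp only [mem_accept_blockInstance, objectLevel, mem_insert, mem_singleton, Fin.ext_iff]
      grind
  · rw [key {⟨m, hmn⟩}]
    · rw [card_singleton]
      simp only [objectLevel]
      grind
    · intro h'
      simp only [mem_accept_blockInstance, objectLevel, mem_singleton, Fin.ext_iff]
      grind

theorem consistent_blockProfile (hm : 0 < m) {w : Fin n → ℝ} (hw : ∀ i, 0 < w i ∧ w i < 1) :
    (blockInstance n m hmn).Consistent (blockProfile m w) := by
  refine ⟨fun i h => ?_, fun i h hh => ?_, fun i h h' hh hh' => ?_⟩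
  · have := hw i
    unfold blockProfile
    split_ifs <;> constructor <;> linarith
  · rw [mem_accept_blockInstance] at hh
    unfold blockProfile
    grind
  · rw [mem_accept_blockInstance] at hh hh'
    have hb := agentBlock_lt hm i
    have := hw i
    rw [pref_blockInstance]
    unfold blockProfile objectLevel
    grind

theorem unitRange_blockProfile (hm : 0 < m) (hmn' : m + 1 < n) (w : Fin n → ℝ) :
    (blockInstance n m hmn).UnitRange (blockProfile m w) := by
  intro i
  have hb := agentBlock_lt hm i
  refine ⟨⟨⟨m, hmn⟩, ?_, ?_⟩, ⟨⟨m + 1, hmn'⟩, ?_, ?_⟩, ⟨m, hmn⟩, ?_, ⟨m + 1, hmn'⟩, ?_, ?_⟩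
  · simp [mem_accept_blockInstance]
  · simp [blockProfile]
  · simp [mem_accept_blockInstance]
  · simp only [blockProfile]
    grind
  · simp [mem_accept_blockInstance]
  · simp [mem_accept_blockInstance]
  · simp [OSMInstance.strictPref, pref_blockInstance, objectLevel]

/-- Any choice of one agent among the first `3 * m` from each block extends to a matching with
property `X` giving the middle objects to the chosen agents. -/
theorem exists_satisfiesProp_of_choice (X : MatchProp) (hm : 0 < m) (hn : 3 * m + 2 ≤ n)
    (c : Fin n → Fin n)
    (hc : ∀ k : Fin n, k.val < m → agentBlock m (c k) = k ∧ (c k).val < 3 * m) :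
    ∃ μ, SatisfiesProp X (blockInstance n m hmn) μ ∧ ∀ k : Fin n, k.val < m → (c k, k) ∈ μ := by
  have hfst : n - 1 < n := by omega
  have hsnd : n - 2 < n := by omega
  set own : Fin n → Fin n := fun h =>
    if h.val = m then ⟨n - 1, hfst⟩ else if h.val = m + 1 then ⟨n - 2, hsnd⟩ else c h with hown
  have hinj : ∀ h h' : Fin n, h.val ≤ m + 1 → h'.val ≤ m + 1 → own h = own h' → h = h' := by
    intro h h' hh hh' heq
    have h₁ := hc h
    have h₂ := hc h'
    ext
    have heq' : (own h).val = (own h').val := congrArg Fin.val heq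
    simp only [hown] at heq heq'
    grind
  refine ⟨univ.filter fun e => e.2.val ≤ m + 1 ∧ e.1 = own e.2, ?_, ?_⟩
  · refine OSMInstance.satisfiesProp_of_covering X (lev := fun h => objectLevel m h)
      (rk := fun h => 3 - objectLevel m h) (fun _ _ _ => pref_blockInstance hmn)
      (fun _ _ hh _ hh' => objectLevel_inj_on_accept hmn hm hh hh')
      (fun _ _ hh => edgeRank_blockInstance hmn hm hh) ⟨?_, ?_, ?_⟩ ?_
    · rintro ⟨i, h⟩ he
      simp only [mem_filter, mem_univ, true_and] at he
      rw [mem_accept_blockInstance]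
      obtain ⟨hh, rfl⟩ := he
      have := hc h
      simp only [hown]
      grind
    · rintro ⟨i, h⟩ he ⟨i', h'⟩ he' heq
      simp only [mem_filter, mem_univ, true_and] at he he' heq
      have := hinj h h' he.1 he'.1 (by rw [← he.2, ← he'.2, heq])
      rw [heq, this]
    · rintro ⟨i, h⟩ he ⟨i', h'⟩ he' heq
      simp only [mem_filter, mem_univ, true_and] at he he' heq
      rw [he.2, he'.2, heq]
    · intro i h hh
      rw [mem_accept_blockInstance] at hh
      have := agentBlock_lt hm i
      exact ⟨own h, by simp only [mem_filter, mem_univ, true_and, and_true]; omega⟩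
  · intro k hk
    simp only [mem_filter, mem_univ, true_and, hown]
    grind

/-- The welfare of a matching is at most the sum of per-object bounds on the values of its
edges. -/
theorem OSMInstance.IsMatching.SW_le {I : OSMInstance n} {v : Fin n → Fin n → ℝ}
    {μ : Finset (Fin n × Fin n)} (hμ : I.IsMatching μ) {β : Fin n → ℝ} (hβ : ∀ h, 0 ≤ β h)
    (hv : ∀ i h, (i, h) ∈ μ → v i h ≤ β h) : I.SW v μ ≤ ∑ h, β h := by
  calc I.SW v μ ≤ ∑ e ∈ μ, β e.2 := sum_le_sum fun e he => hv e.1 e.2 he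
    _ = ∑ h ∈ μ.image Prod.snd, β h :=
      (sum_image fun e he e' he' heq => hμ.2.2 e he e' he' heq).symm
    _ ≤ ∑ h, β h := sum_le_sum_of_subset_of_nonneg (subset_univ _) fun h _ _ => hβ h

/-- The welfare of a set of edges containing `(c k, k)` for all `k ∈ K` is at least the sum of
the values of these edges. -/
theorem OSMInstance.sum_le_SW {I : OSMInstance n} {v : Fin n → Fin n → ℝ}
    (hv : ∀ i h, 0 ≤ v i h) {μ : Finset (Fin n × Fin n)} {K : Finset (Fin n)} {c : Fin n → Fin n}
    (hc : ∀ k ∈ K, (c k, k) ∈ μ) : ∑ k ∈ K, v (c k) k ≤ I.SW v μ := by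
  have himage : ∑ k ∈ K, v (c k) k = ∑ e ∈ K.image (fun k => (c k, k)), v e.1 e.2 := by
    rw [sum_image fun k _ k' _ heq => congrArg Prod.snd heq]
  rw [himage]
  refine sum_le_sum_of_subset_of_nonneg (fun e he => ?_) fun e _ _ => hv _ _
  obtain ⟨k, hk, rfl⟩ := mem_image.1 he
  exact hc k hk

end BlockInstance

/-- Each block contains two agents on which a given predicate agrees. -/
theorem exists_pair_in_block {n m : ℕ} (hn : 3 * m + 2 ≤ n) (P : Fin n → Prop)
    (k : Fin n) : ∃ (t : Prop) (p q : Fin n), k.val < m → p ≠ q ∧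
      (P p ↔ t) ∧ (P q ↔ t) ∧
      (agentBlock m p = k ∧ p.val < 3 * m) ∧ (agentBlock m q = k ∧ q.val < 3 * m) := by
  by_cases hk : k.val < m
  swap
  · exact ⟨True, k, k, fun h => absurd h hk⟩
  have hblock : ∀ r < 3, agentBlock m (3 * k.val + r) = k ∧ 3 * k.val + r < 3 * m := by
    intro r hr
    unfold agentBlock
    omega
  have h₀ := hblock 0 (by omega)
  have h₁ := hblock 1 (by omega)
  have h₂ := hblock 2 (by omega)
  set a : Fin n := ⟨3 * k.val + 0, by omega⟩ with ha
  set b : Fin n := ⟨3 * k.val + 1, by omega⟩ with hb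
  set d : Fin n := ⟨3 * k.val + 2, by omega⟩ with hd
  have hab : a ≠ b := by simp [ha, hb]
  have had : a ≠ d := by simp [ha, hd]
  have hbd : b ≠ d := by simp [hb, hd]
  by_cases h : P a ↔ P b
  · exact ⟨P a, a, b, fun _ => ⟨hab, Iff.rfl, h.symm, h₀, h₁⟩⟩
  by_cases h' : P a ↔ P d
  · exact ⟨P a, a, d, fun _ => ⟨had, Iff.rfl, h'.symm, h₀, h₂⟩⟩
  · exact ⟨P b, b, d, fun _ => ⟨hbd, Iff.rfl, by tauto, h₁, h₂⟩⟩

/-- for all large enough `n`, every non-adaptive deterministic algorithm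
asking one binary threshold query per (agent, object) pair that always outputs a
matching satisfying `X` loses a factor of at least `c·√n` in welfare on some instance
with unit-range valuations. -/
theorem nonadaptive_unitRange_lower_bound (X : MatchProp) :
    ∃ c : ℝ, 0 < c ∧ ∃ n₀ : ℕ, ∀ n : ℕ, n₀ ≤ n →
      ∀ T : OSMInstance n → Fin n → Fin n → ℝ,
        (∀ I i j, 0 ≤ T I i j ∧ T I i j ≤ 1) →
      ∀ f : OSMInstance n → (Fin n → Fin n → Bool) → Finset (Fin n × Fin n),
        (∀ I : OSMInstance n, ∀ v : Fin n → Fin n → ℝ,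
          I.Consistent v → I.UnitRange v →
            SatisfiesProp X I (f I (fun i j => decide (T I i j ≤ v i j)))) →
        ∃ I : OSMInstance n, ∃ v : Fin n → Fin n → ℝ,
          I.Consistent v ∧ I.UnitRange v ∧
          ∃ μ', SatisfiesProp X I μ' ∧
            c * Real.sqrt n *
              I.SW v (f I (fun i j => decide (T I i j ≤ v i j))) ≤ I.SW v μ' := by
  refine ⟨1 / 24, by norm_num, 8, fun n hn T _ f hf => ?_⟩
  obtain ⟨m, hm, hmn, hmn₆⟩ : ∃ m : ℕ, 0 < m ∧ 3 * m + 2 ≤ n ∧ n ≤ 6 * m :=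
    ⟨(n - 2) / 3, by omega, by omega, by omega⟩
  have hmlt : m < n := by omega
  have hmsucc : m + 1 < n := by omega
  set I := blockInstance n m hmlt with hI
  have hsqrt : 2 ≤ Real.sqrt n := by
    rw [show (2 : ℝ) = Real.sqrt 4 by
      rw [show (4 : ℝ) = 2 ^ 2 by norm_num, Real.sqrt_sq (by norm_num)]]
    exact Real.sqrt_le_sqrt (by exact_mod_cast (by omega : 4 ≤ n))
  have hsq : Real.sqrt n * Real.sqrt n = n := Real.mul_self_sqrt (Nat.cast_nonneg n)
  set R := Real.sqrt n with hR
  set s : ℝ := R⁻¹ with hs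
  have hRs : R * s = 1 := mul_inv_cancel₀ (by positivity)
  have hs₀ : 0 < s := by positivity
  have hs₁ : s ≤ 1 / 2 := by nlinarith
  -- agent `i` is `small` if the threshold for her middle object is at most `s`
  set mid : Fin n → Fin n := fun i => ⟨agentBlock m i, (agentBlock_lt hm i).trans hmlt⟩ with hmid
  choose t p q hpq using exists_pair_in_block hmn (fun i => T I i (mid i) ≤ s)
  set lo : Fin n → ℝ := fun k => if t k then s else s * s with hlo
  set hi : Fin n → ℝ := fun k => if t k then 1 / 2 else s / 2 with hhi
  set w₀ : Fin n → ℝ := fun i => if T I i (mid i) ≤ s then lo (mid i) else s * s with hw₀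
  have hw₀b : ∀ i, 0 < w₀ i ∧ w₀ i < 1 := by
    intro i
    have : 0 < s * s := by positivity
    have : s * s < 1 := by nlinarith
    simp only [hw₀, hlo]
    split_ifs <;> constructor <;> linarith
  set μ₀ := f I (fun i j => decide (T I i j ≤ blockProfile m w₀ i j)) with hμ₀
  have hμ₀m : I.IsMatching μ₀ :=
    (hf I _ (consistent_blockProfile hmlt hm hw₀b)
      (unitRange_blockProfile hmlt hm hmsucc w₀)).isMatching
  set c : Fin n → Fin n := fun k => if (p k, k) ∈ μ₀ then q k else p k with hcdef
  have hc : ∀ k : Fin n, k.val < m → (agentBlock m (c k) = k ∧ (c k).val < 3 * m) ∧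
      (T I (c k) k ≤ s ↔ t k) ∧ (c k, k) ∉ μ₀ := by
    intro k hk
    obtain ⟨hne, hp, hq, hpb, hqb⟩ := hpq k hk
    have hmp : mid (p k) = k := Fin.ext hpb.1
    have hmq : mid (q k) = k := Fin.ext hqb.1
    rw [hmp] at hp
    rw [hmq] at hq
    simp only [hcdef]
    split_ifs with hmem
    · exact ⟨hqb, hq, fun hmem' => hne (congrArg Prod.fst (hμ₀m.2.2 _ hmem _ hmem' rfl))⟩
    · exact ⟨hpb, hp, hmem⟩
  set w : Fin n → ℝ := fun i => if i = c (mid i) then hi (mid i) else w₀ i with hw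
  have hwb : ∀ i, 0 < w i ∧ w i < 1 := by
    intro i
    have := hw₀b i
    simp only [hw, hhi]
    split_ifs <;> constructor <;> linarith
  have hmidlt : ∀ i, (mid i).val < m := fun i => agentBlock_lt hm i
  have hans : (fun i j => decide (T I i j ≤ blockProfile m w i j)) =
      fun i j => decide (T I i j ≤ blockProfile m w₀ i j) := by
    funext i j
    rw [decide_eq_decide]
    unfold blockProfile
    split_ifs with h₁ h₂
    · rfl
    · obtain rfl : j = mid i := Fin.ext h₂
      by_cases hic : i = c (mid i)
      · have htype := (hc (mid i) (hmidlt i)).2.1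
        rw [← hic] at htype
        have hwi : w i = hi (mid i) := if_pos hic
        rw [hwi]
        simp only [hw₀, hhi, hlo]
        by_cases ht : t (mid i)
        · have hT := htype.2 ht
          simp only [ht, hT, if_true, iff_true]
          linarith
        · have hT : ¬ T I i (mid i) ≤ s := fun h => ht (htype.1 h)
          simp only [ht, hT, if_false]
          push Not at hT
          constructor <;> intro h <;> nlinarith
      · have hwi : w i = w₀ i := if_neg hic
        rw [hwi]
    · rfl
  have hcons : I.Consistent (blockProfile m w) := consistent_blockProfile hmlt hm hwb
  obtain ⟨μ, hμX, hμc⟩ := exists_satisfiesProp_of_choice hmlt X hm hmn c fun k hk => (hc k hk).1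
  refine ⟨I, blockProfile m w, hcons, unitRange_blockProfile hmlt hm hmsucc w, μ, hμX, ?_⟩
  rw [hans, ← hμ₀]
  set K : Finset (Fin n) := univ.filter fun k => k.val < m with hK
  have hKcard : K.card = m := by
    rw [hK, Fin.card_filter_val_lt, min_eq_right hmlt.le]
  have hlo₀ : ∀ k, s * s ≤ lo k := by
    intro k
    simp only [hlo]
    split_ifs <;> nlinarith
  have hupper : I.SW (blockProfile m w) μ₀ ≤ 1 + ∑ k ∈ K, lo k := by
    have hβ := hμ₀m.SW_le (v := blockProfile m w)
      (β := fun h => (if h = ⟨m, hmlt⟩ then 1 else 0) + if h.val < m then lo h else 0) ?_ ?_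
    · rwa [sum_add_distrib, sum_ite_eq' univ, if_pos (mem_univ _), ← sum_filter] at hβ
    · intro h
      have := hlo₀ h
      have : 0 < s * s := by positivity
      split_ifs <;> linarith
    · intro i h hih
      have hloh := hlo₀ h
      have hss : 0 < s * s := by positivity
      unfold blockProfile
      by_cases h₁ : h.val = m
      · have : h = ⟨m, hmlt⟩ := Fin.ext h₁
        simp [this]
      have h₁' : h ≠ ⟨m, hmlt⟩ := fun heq => h₁ (congrArg Fin.val heq)
      simp only [h₁, h₁', if_false, zero_add]
      by_cases h₂ : h.val = agentBlock m i
      · obtain rfl : h = mid i := Fin.ext h₂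
        have hic : i ≠ c (mid i) := by
          intro hic
          apply (hc (mid i) (hmidlt i)).2.2
          rwa [← hic]
        have hwi : w i = w₀ i := if_neg hic
        rw [if_pos h₂, if_pos (hmidlt i), hwi]
        simp only [hw₀]
        split_ifs <;> linarith
      · rw [if_neg h₂]
        split_ifs <;> linarith
  have hlower : ∑ k ∈ K, hi k ≤ I.SW (blockProfile m w) μ := by
    have hsum : ∑ k ∈ K, hi k = ∑ k ∈ K, blockProfile m w (c k) k := by
      refine sum_congr rfl fun k hk => ?_
      have hkm : k.val < m := by simpa [hK] using hk
      have hck := (hc k hkm).1.1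
      have hmk : mid (c k) = k := Fin.ext hck
      unfold blockProfile
      rw [if_neg hkm.ne, if_pos hck.symm]
      simp only [hw, hmk, if_true]
    rw [hsum]
    refine OSMInstance.sum_le_SW (fun i h => (hcons.1 i h).1) fun k hk => hμc k ?_
    simpa [hK] using hk
  have hterm : ∀ k ∈ K, s / 4 + 1 / 24 * R * lo k ≤ hi k := by
    intro k _
    simp only [hlo, hhi]
    split_ifs
    · nlinarith
    · rw [show 1 / 24 * R * (s * s) = 1 / 24 * (R * s) * s by ring, hRs]
      linarith
  have hsum := sum_le_sum hterm
  rw [sum_add_distrib, ← mul_sum, sum_const, hKcard, nsmul_eq_mul] at hsum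
  have hmR : R / 24 ≤ m * (s / 4) := by
    have hnm : (n : ℝ) ≤ 6 * m := by exact_mod_cast hmn₆
    have hRn : R = n * s := by rw [← hsq, mul_assoc, hRs, mul_one]
    have := mul_le_mul_of_nonneg_right hnm hs₀.le
    linarith
  calc 1 / 24 * R * I.SW (blockProfile m w) μ₀
      ≤ 1 / 24 * R * (1 + ∑ k ∈ K, lo k) := mul_le_mul_of_nonneg_left hupper (by positivity)
    _ ≤ ∑ k ∈ K, hi k := by linarith
    _ ≤ I.SW (blockProfile m w) μ := hlower
end

section
/- Let X be one of the properties: Pareto optimal, rank-maximal, max-cardinality rank-maximal, fair. (i) There exist a constant c > 0 and n_0 such that for every n ≥ n_0 and every function f assigning to each instance I with n agents and n objects a matching f(I) of G_I satisfying X, there exist an instance I with n agents and n objects and a unit-sum valuation profile v consistent with I such that max{SW(μ' | v) : μ' a matching of G_I satisfying X} ≥ c·n²·SW(f(I) | v). (ii) This bound is asymptotically tight: for every instance I with n ≥ 2 agents and n objects, every matching μ of G_I satisfying X, and every unit-sum valuation profile v consistent with I, max{SW(μ' | v) : μ' a matching of G_I satisfying X} ≤ n²·SW(μ | v). -/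
open Finset
open scoped Classical

namespace OSMInstance

variable {n : ℕ}

theorem edgeRank_le_of_pref (I : OSMInstance n) {i h h' : Fin n} (hh : h ∈ I.accept i)
    (hh' : h' ∈ I.accept i) (hp : I.pref i h' h) : I.edgeRank (i, h') ≤ I.edgeRank (i, h) := by
  unfold edgeRank
  gcongr with x hx
  rintro ⟨h1, h2⟩
  exact ⟨I.pref_trans i x h' h hx hh' hh h1 hp, fun h3 =>
    h2 (I.pref_trans i h' h x hh' hh hx hp h3)⟩

theorem edgeRank_lt_of_strictPref (I : OSMInstance n) {i h h' : Fin n} (hh : h ∈ I.accept i)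
    (hh' : h' ∈ I.accept i) (hp : I.strictPref i h' h) :
    I.edgeRank (i, h') < I.edgeRank (i, h) := by
  unfold edgeRank
  refine Nat.succ_lt_succ (Finset.card_lt_card ?_)
  refine Finset.ssubset_iff_of_subset (fun x hx => ?_) |>.2 ⟨h', ?_, ?_⟩
  · simp only [Finset.mem_filter] at hx ⊢
    obtain ⟨hx, h1, h2⟩ := hx
    exact ⟨hx, I.pref_trans i x h' h hx hh' hh h1 hp.1, fun h3 =>
      h2 (I.pref_trans i h' h x hh' hh hx hp.1 h3)⟩
  · simpa using ⟨hh', hp⟩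
  · exact fun hx => (Finset.mem_filter.1 hx).2.2 (Finset.mem_filter.1 hx).2.1

theorem edgeRank_le (I : OSMInstance n) (e : Fin n × Fin n) : I.edgeRank e ≤ n := by
  have : (I.accept e.1).filter (fun h' => I.strictPref e.1 h' e.2) ⊂ Finset.univ := by
    refine Finset.ssubset_iff_of_subset (Finset.subset_univ _) |>.2 ⟨e.2, by simp, ?_⟩
    exact fun hx => (Finset.mem_filter.1 hx).2.2 (Finset.mem_filter.1 hx).2.1
  simpa [edgeRank, Nat.succ_le_iff] using Finset.card_lt_card this

/-- The number of edges of `μ` of rank at most `k`. -/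
noncomputable def cumSig (I : OSMInstance n) (μ : Finset (Fin n × Fin n)) (k : ℕ) : ℤ :=
  ((μ.filter (fun e => I.edgeRank e ≤ k)).card : ℤ)

theorem cumSig_zero (I : OSMInstance n) (μ : Finset (Fin n × Fin n)) : I.cumSig μ 0 = 0 := by
  simp [cumSig, edgeRank]

theorem cumSig_succ (I : OSMInstance n) (μ : Finset (Fin n × Fin n)) (k : ℕ) :
    I.cumSig μ (k + 1) = I.cumSig μ k + I.sig μ (k + 1) := by
  unfold cumSig sig
  rw [← Nat.cast_add, ← Finset.card_union_of_disjoint, ← Finset.filter_or]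
  · simp only [Nat.le_succ_iff]
  · exact Finset.disjoint_filter.2 fun e _ h1 h2 => by omega

theorem cumSig_self (I : OSMInstance n) (μ : Finset (Fin n × Fin n)) :
    I.cumSig μ n = μ.card := by
  unfold cumSig
  rw [Finset.filter_true_of_mem fun e _ => I.edgeRank_le e]

theorem cumSig_eq_card_agents {I : OSMInstance n} {μ : Finset (Fin n × Fin n)}
    (hμ : I.IsMatching μ) (k : ℕ) :
    I.cumSig μ k = (Finset.univ.filter
      (fun i => ∃ h, (i, h) ∈ μ ∧ I.edgeRank (i, h) ≤ k)).card := by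
  unfold cumSig
  rw [← Finset.card_image_of_injOn (f := Prod.fst)]
  · congr 2
    ext i
    simp
  · intro e he e' he' h
    simp only [Finset.coe_filter, Set.mem_ofPred_eq] at he he'
    exact hμ.2.1 e he.1 e' he'.1 h

theorem WeakImprove.exists_edgeRank_le {I : OSMInstance n} {μ ν : Finset (Fin n × Fin n)}
    (hμ : I.IsMatching μ) (hν : I.IsMatching ν) {i h : Fin n} (hw : I.WeakImprove ν μ i)
    (hi : (i, h) ∈ μ) : ∃ h', (i, h') ∈ ν ∧ I.edgeRank (i, h') ≤ I.edgeRank (i, h) := by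
  rcases hw with hu | ⟨h₁, h', h1, h2, h3⟩
  · exact absurd hi (hu h)
  · obtain rfl : h₁ = h := congrArg Prod.snd (hμ.2.1 _ h1 _ hi rfl)
    exact ⟨h', h2, I.edgeRank_le_of_pref (hμ.1 _ hi) (hν.1 _ h2) h3⟩

theorem cumSig_le_of_weakImprove {I : OSMInstance n} {μ ν : Finset (Fin n × Fin n)}
    (hμ : I.IsMatching μ) (hν : I.IsMatching ν) (hw : ∀ i, I.WeakImprove ν μ i) (k : ℕ) :
    I.cumSig μ k ≤ I.cumSig ν k := by
  rw [cumSig_eq_card_agents hμ, cumSig_eq_card_agents hν]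
  refine Nat.cast_le.2 (Finset.card_le_card (Finset.monotone_filter_right _ ?_))
  rintro i - ⟨h, hh, hk⟩
  obtain ⟨h', hh', hk'⟩ := (hw i).exists_edgeRank_le hμ hν hh
  exact ⟨h', hh', hk'.trans hk⟩

theorem exists_cumSig_lt {I : OSMInstance n} {μ ν : Finset (Fin n × Fin n)}
    (hμ : I.IsMatching μ) (hν : I.IsMatching ν) (hw : ∀ i, I.WeakImprove ν μ i)
    {i : Fin n} (hs : I.StrictImprove ν μ i) : ∃ k ≤ n, I.cumSig μ k < I.cumSig ν k := by
  obtain ⟨h', hh', hlt⟩ : ∃ h', (i, h') ∈ ν ∧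
      ∀ h, (i, h) ∈ μ → I.edgeRank (i, h') < I.edgeRank (i, h) := by
    rcases hs with ⟨hu, h', hh'⟩ | ⟨h, h', h1, h2, h3⟩
    · exact ⟨h', hh', fun h hh => absurd hh (hu h)⟩
    · refine ⟨h', h2, fun h₁ hh₁ => ?_⟩
      obtain rfl : h = h₁ := congrArg Prod.snd (hμ.2.1 _ h1 _ hh₁ rfl)
      exact I.edgeRank_lt_of_strictPref (hμ.1 _ h1) (hν.1 _ h2) h3
  refine ⟨I.edgeRank (i, h'), I.edgeRank_le _, ?_⟩
  rw [cumSig_eq_card_agents hμ, cumSig_eq_card_agents hν, Nat.cast_lt]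
  refine Finset.card_lt_card (Finset.ssubset_iff_of_subset (fun j hj => ?_) |>.2 ⟨i, ?_, ?_⟩)
  · simp only [Finset.mem_filter, Finset.mem_univ, true_and] at hj ⊢
    obtain ⟨h, hh, hk⟩ := hj
    obtain ⟨h'', hh'', hk'⟩ := (hw j).exists_edgeRank_le hμ hν hh
    exact ⟨h'', hh'', hk'.trans hk⟩
  · simpa using ⟨h', hh', le_rfl⟩
  · simpa using hlt

theorem cumSig_congr {I : OSMInstance n} {μ ν : Finset (Fin n × Fin n)} {k : ℕ}
    (h : ∀ j < k, I.sig ν (j + 1) = I.sig μ (j + 1)) : I.cumSig ν k = I.cumSig μ k := by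
  induction k with
  | zero => simp [cumSig_zero]
  | succ k ih =>
    rw [cumSig_succ, cumSig_succ, ih fun j hj => h j (by omega), h k (by omega)]

theorem RankMaximal.paretoOptimal {I : OSMInstance n} {μ : Finset (Fin n × Fin n)}
    (h : I.RankMaximal μ) : I.ParetoOptimal μ := by
  refine ⟨h.1, ?_⟩
  rintro ⟨ν, hν, hw, i, hs⟩
  obtain ⟨k, hk, hlt⟩ := exists_cumSig_lt h.1 hν hw hs
  rcases h.2 ν hν with heq | ⟨j, -, heq, hj⟩
  · exact hlt.ne' (cumSig_congr fun j hj => heq j (by omega))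
  · have := cumSig_le_of_weakImprove h.1 hν hw (j + 1)
    have := cumSig_congr heq
    rw [cumSig_succ, cumSig_succ] at *
    dsimp only at hj
    omega

theorem MaxCardRankMaximal.paretoOptimal {I : OSMInstance n} {μ : Finset (Fin n × Fin n)}
    (h : I.MaxCardRankMaximal μ) : I.ParetoOptimal μ := by
  refine ⟨h.1, ?_⟩
  rintro ⟨ν, hν, hw, i, hs⟩
  obtain ⟨k, hk, hlt⟩ := exists_cumSig_lt h.1 hν hw hs
  rcases h.2 ν hν with heq | ⟨j, -, heq, hj⟩
  · exact hlt.ne' (cumSig_congr fun j hj => by simpa using heq (j + 1) (by omega))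
  · cases j with
    | zero =>
      have := cumSig_le_of_weakImprove h.1 hν hw n
      rw [cumSig_self, cumSig_self] at this
      simp only [if_true] at hj
      omega
    | succ j =>
      have h1 := cumSig_le_of_weakImprove h.1 hν hw (j + 1)
      have h2 : I.cumSig ν j = I.cumSig μ j :=
        cumSig_congr fun i hi => by simpa using heq (i + 1) (by omega)
      simp only [Nat.succ_ne_zero, if_false] at hj
      rw [cumSig_succ, cumSig_succ] at h1
      omega

theorem FairMatching.paretoOptimal {I : OSMInstance n} {μ : Finset (Fin n × Fin n)}
    (h : I.FairMatching μ) : I.ParetoOptimal μ := by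
  refine ⟨h.1, ?_⟩
  rintro ⟨ν, hν, hw, i, hs⟩
  obtain ⟨k, hk, hlt⟩ := exists_cumSig_lt h.1 hν hw hs
  rcases h.2 ν hν with heq | ⟨j, hjn, heq, hj⟩
  · refine hlt.ne' (cumSig_congr fun j hj => ?_)
    have := heq (n - j) (by omega)
    dsimp only at this
    rw [if_neg (by omega), if_neg (by omega), show n + 1 - (n - j) = j + 1 by omega] at this
    omega
  · cases j with
    | zero =>
      have := cumSig_le_of_weakImprove h.1 hν hw n
      rw [cumSig_self, cumSig_self] at this
      simp only [if_true] at hj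
      omega
    | succ j =>
      have hcard : (ν.card : ℤ) = μ.card := by simpa using heq 0 (by omega)
      have htail : ∀ d ≤ j, I.cumSig ν (n - d) = I.cumSig μ (n - d) := by
        intro d
        induction d with
        | zero => intro _; simpa [cumSig_self] using hcard
        | succ d ih =>
          intro hd
          have h1 := ih (by omega)
          have h2 := heq (d + 1) (by omega)
          dsimp only at h2
          rw [if_neg (by omega), if_neg (by omega),
            show n + 1 - (d + 1) = n - (d + 1) + 1 by omega] at h2
          rw [show n - d = n - (d + 1) + 1 by omega, cumSig_succ, cumSig_succ] at h1
          omega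
      have h1 := htail j le_rfl
      have h2 := cumSig_le_of_weakImprove h.1 hν hw (n - (j + 1))
      dsimp only at hj
      rw [if_neg (by omega), if_neg (by omega),
        show n + 1 - (j + 1) = n - (j + 1) + 1 by omega] at hj
      rw [show n - j = n - (j + 1) + 1 by omega, cumSig_succ, cumSig_succ] at h1
      omega

/-- In a Pareto optimal matching, an acceptable object that some agent strictly prefers to
its own allocation is assigned. -/
theorem ParetoOptimal.exists_owner {I : OSMInstance n} {μ : Finset (Fin n × Fin n)}
    (h : I.ParetoOptimal μ) {i t : Fin n} (ht : t ∈ I.accept i)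
    (hs : ∀ h', (i, h') ∈ μ → I.strictPref i t h') : ∃ a, (a, t) ∈ μ := by
  by_contra! hno
  refine h.2 ⟨insert (i, t) (μ.filter (fun e => e.1 ≠ i)), ⟨?_, ?_, ?_⟩, ?_, i, ?_⟩
  · rintro e he
    simp only [Finset.mem_insert, Finset.mem_filter] at he
    rcases he with rfl | he
    · exact ht
    · exact h.1.1 e he.1
  · intro e he e' he' hee
    simp only [Finset.mem_insert, Finset.mem_filter] at he he'
    rcases he with rfl | he <;> rcases he' with rfl | he'
    · rfl
    · exact absurd hee.symm he'.2
    · exact absurd hee he.2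
    · exact h.1.2.1 e he.1 e' he'.1 hee
  · intro e he e' he' hee
    simp only [Finset.mem_insert, Finset.mem_filter] at he he'
    rcases he with rfl | he <;> rcases he' with rfl | he'
    · rfl
    · subst hee; exact absurd he'.1 (hno _)
    · subst hee; exact absurd he.1 (hno _)
    · exact h.1.2.2 e he.1 e' he'.1 hee
  · intro j
    by_cases hu : I.Unmatched μ j
    · exact Or.inl hu
    · simp only [Unmatched, not_forall, not_not] at hu
      obtain ⟨h₁, hh₁⟩ := hu
      by_cases hj : j = i
      · subst hj
        exact Or.inr ⟨h₁, t, hh₁, by simp, (hs _ hh₁).1⟩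
      · exact Or.inr ⟨h₁, h₁, hh₁, by simp [hh₁, hj], I.pref_refl _ _ (h.1.1 _ hh₁)⟩
  · by_cases hu : I.Unmatched μ i
    · exact Or.inl ⟨hu, t, by simp⟩
    · simp only [Unmatched, not_forall, not_not] at hu
      obtain ⟨h₁, hh₁⟩ := hu
      exact Or.inr ⟨h₁, t, hh₁, by simp, hs _ hh₁⟩

theorem exists_top (I : OSMInstance n) (i : Fin n) :
    ∃ t ∈ I.accept i, ∀ h ∈ I.accept i, I.pref i t h := by
  obtain ⟨t, ht, hmin⟩ := Finset.exists_min_image (I.accept i) (fun h => I.edgeRank (i, h))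
    (I.accept_nonempty i)
  refine ⟨t, ht, fun h hh => ?_⟩
  by_contra hp
  have hs : I.strictPref i h t := ⟨(I.pref_total i t h ht hh).resolve_left hp, hp⟩
  exact (I.edgeRank_lt_of_strictPref ht hh hs).not_ge (hmin h hh)

theorem periodicPts_nonempty {α : Type*} [Finite α] [Nonempty α] (g : α → α) :
    (Function.periodicPts g).Nonempty := by
  obtain ⟨x⟩ := ‹Nonempty α›
  obtain ⟨a, b, hab, h⟩ := Finite.exists_ne_map_eq_of_infinite (fun k : ℕ => g^[k] x)
  wlog hlt : a < b generalizing a b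
  · exact this b a hab.symm h.symm (by omega)
  refine ⟨g^[a] x, b - a, by omega, ?_⟩
  simp only [Function.IsPeriodicPt, Function.IsFixedPt]
  rw [← Function.iterate_add_apply, Nat.sub_add_cancel hlt.le]
  exact h.symm

/-- In a Pareto optimal matching some agent receives one of its most preferred objects:
otherwise trading along a cycle of owners of top objects is an improvement. -/
theorem ParetoOptimal.exists_top_edge {I : OSMInstance n} {μ : Finset (Fin n × Fin n)}
    (hμ : I.ParetoOptimal μ) (hn : 0 < n) :
    ∃ i h, (i, h) ∈ μ ∧ ∀ h' ∈ I.accept i, I.pref i h h' := by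
  by_contra! hno
  choose t ht htop using I.exists_top
  have hstrict : ∀ i h, (i, h) ∈ μ → I.strictPref i (t i) h := by
    intro i h hh
    refine ⟨htop i h (hμ.1.1 _ hh), fun hp => ?_⟩
    obtain ⟨h', hh', hnp⟩ := hno i h hh
    exact hnp (I.pref_trans i h (t i) h' (hμ.1.1 _ hh) (ht i) hh' hp (htop i h' hh'))
  choose g hg using fun i => hμ.exists_owner (ht i) (hstrict i)
  have : Nonempty (Fin n) := ⟨⟨0, hn⟩⟩
  obtain ⟨i₀, hi₀⟩ := periodicPts_nonempty g
  have hbij := Function.bijOn_periodicPts g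
  set P := Function.periodicPts g
  set ν : Finset (Fin n × Fin n) := μ.filter (fun e => e.1 ∉ P) ∪
    (Finset.univ.filter (fun i => i ∈ P)).image (fun i => (i, t i)) with hν
  have hmem : ∀ i h, (i, h) ∈ ν ↔ ((i, h) ∈ μ ∧ i ∉ P) ∨ (i ∈ P ∧ t i = h) := by
    intro i h
    simp only [hν, Finset.mem_union, Finset.mem_filter, Finset.mem_image, Finset.mem_univ,
      true_and, Prod.mk.injEq]
    constructor
    · rintro (h | ⟨j, hj, rfl, rfl⟩)
      · exact Or.inl h
      · exact Or.inr ⟨hj, rfl⟩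
    · rintro (h | ⟨hj, rfl⟩)
      · exact Or.inl h
      · exact Or.inr ⟨i, hj, rfl, rfl⟩
  have hclash : ∀ i j, (i, t j) ∈ μ → j ∈ P → i ∈ P := by
    intro i j hij hj
    obtain rfl : i = g j := congrArg Prod.fst (hμ.1.2.2 _ hij _ (hg j) rfl)
    exact hbij.mapsTo hj
  refine hμ.2 ⟨ν, ⟨?_, ?_, ?_⟩, fun i => ?_, i₀, ?_⟩
  · rintro ⟨i, h⟩ he
    rcases (hmem i h).1 he with he | ⟨-, rfl⟩
    · exact hμ.1.1 _ he.1
    · exact ht i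
  · rintro ⟨i, h⟩ he ⟨j, h'⟩ he' (rfl : i = j)
    rcases (hmem _ _).1 he with he | ⟨hi, rfl⟩ <;> rcases (hmem _ _).1 he' with he' | ⟨hj, rfl⟩
    · exact hμ.1.2.1 _ he.1 _ he'.1 rfl
    · exact absurd hj he.2
    · exact absurd hi he'.2
    · rfl
  · rintro ⟨i, h⟩ he ⟨j, h'⟩ he' (rfl : h = h')
    rcases (hmem _ _).1 he with he | ⟨hi, hih⟩ <;> rcases (hmem _ _).1 he' with he' | ⟨hj, hjh⟩
    · exact hμ.1.2.2 _ he.1 _ he'.1 rfl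
    · subst hjh; exact absurd (hclash _ _ he.1 hj) he.2
    · subst hih; exact absurd (hclash _ _ he'.1 hi) he'.2
    · have h1 := hg i
      rw [hih, ← hjh] at h1
      have h2 : g i = g j := congrArg Prod.fst (hμ.1.2.2 _ h1 _ (hg j) rfl)
      rw [hbij.injOn hi hj h2]
  · by_cases hu : I.Unmatched μ i
    · exact Or.inl hu
    · simp only [Unmatched, not_forall, not_not] at hu
      obtain ⟨h, hh⟩ := hu
      by_cases hi : i ∈ P
      · exact Or.inr ⟨h, t i, hh, (hmem _ _).2 (Or.inr ⟨hi, rfl⟩), (hstrict i h hh).1⟩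
      · exact Or.inr ⟨h, h, hh, (hmem _ _).2 (Or.inl ⟨hh, hi⟩), I.pref_refl _ _ (hμ.1.1 _ hh)⟩
  · have hin : (i₀, t i₀) ∈ ν := (hmem _ _).2 (Or.inr ⟨hi₀, rfl⟩)
    by_cases hu : I.Unmatched μ i₀
    · exact Or.inl ⟨hu, t i₀, hin⟩
    · simp only [Unmatched, not_forall, not_not] at hu
      obtain ⟨h, hh⟩ := hu
      exact Or.inr ⟨h, t i₀, hh, hin, hstrict _ h hh⟩

theorem IsMatching.card_le {I : OSMInstance n} {μ : Finset (Fin n × Fin n)}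
    (hμ : I.IsMatching μ) : μ.card ≤ n := by
  have := Finset.card_le_card_of_injOn (s := μ) (t := Finset.univ) Prod.fst (by simp)
    (fun e he e' he' h => hμ.2.1 e he e' he' h)
  simpa using this

/-- The welfare of any matching is at most `n`. -/
theorem SW_le {I : OSMInstance n} {μ : Finset (Fin n × Fin n)} (hμ : I.IsMatching μ)
    {v : Fin n → Fin n → ℝ} (hv : I.Consistent v) : I.SW v μ ≤ n := by
  calc I.SW v μ ≤ ∑ _e ∈ μ, (1 : ℝ) := Finset.sum_le_sum fun e _ => (hv.1 e.1 e.2).2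
    _ = μ.card := by simp
    _ ≤ n := by exact_mod_cast hμ.card_le

/-- A Pareto optimal matching has welfare at least `1 / n` under unit-sum valuations. -/
theorem ParetoOptimal.one_le_mul_SW {I : OSMInstance n} {μ : Finset (Fin n × Fin n)}
    (hμ : I.ParetoOptimal μ) (hn : 0 < n) {v : Fin n → Fin n → ℝ} (hv : I.Consistent v)
    (hu : I.UnitSum v) : 1 ≤ (n : ℝ) * I.SW v μ := by
  obtain ⟨i, h, hh, htop⟩ := hμ.exists_top_edge hn
  calc (1 : ℝ) = ∑ h' ∈ I.accept i, v i h' := (hu i).symm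
    _ ≤ ∑ _h' ∈ I.accept i, v i h := Finset.sum_le_sum fun h' hh' =>
        (hv.2.2 i h h' (hμ.1.1 _ hh) hh').1 (htop h' hh')
    _ = ((I.accept i).card : ℝ) * v i h := by simp
    _ ≤ (n : ℝ) * v i h := by
        gcongr
        · exact (hv.1 i h).1
        · simpa using Finset.card_le_univ (I.accept i)
    _ ≤ (n : ℝ) * I.SW v μ := by
        gcongr
        exact Finset.single_le_sum (f := fun e : Fin n × Fin n => v e.1 e.2)
          (fun e _ => (hv.1 e.1 e.2).1) hh

end OSMInstance

theorem SatisfiesProp.paretoOptimal {n : ℕ} {X : MatchProp} {I : OSMInstance n}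
    {μ : Finset (Fin n × Fin n)} (h : SatisfiesProp X I μ) : I.ParetoOptimal μ := by
  cases X with
  | po => exact h
  | rm => exact OSMInstance.RankMaximal.paretoOptimal h
  | mcrm => exact OSMInstance.MaxCardRankMaximal.paretoOptimal h
  | fair => exact OSMInstance.FairMatching.paretoOptimal h

namespace OSMInstance

variable {n : ℕ}

/-- The edge set obtained from `μ` by renaming the agents along `π`. -/
def relabel (π : Equiv.Perm (Fin n)) (μ : Finset (Fin n × Fin n)) : Finset (Fin n × Fin n) :=
  μ.map (π.prodCongr (Equiv.refl _)).toEmbedding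

theorem mem_relabel {π : Equiv.Perm (Fin n)} {μ : Finset (Fin n × Fin n)} {i h : Fin n} :
    (i, h) ∈ relabel π μ ↔ (π.symm i, h) ∈ μ := by
  simp [relabel]

/-- Renaming agents along `π` preserves all acceptable sets and preferences of `I`. -/
structure IsSymmetry (I : OSMInstance n) (π : Equiv.Perm (Fin n)) : Prop where
  accept_eq : ∀ i, I.accept (π i) = I.accept i
  pref_eq : ∀ i, I.pref (π i) = I.pref i

namespace IsSymmetry

variable {I : OSMInstance n} {π : Equiv.Perm (Fin n)} {μ ν : Finset (Fin n × Fin n)}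

theorem symm (hπ : I.IsSymmetry π) : I.IsSymmetry π.symm where
  accept_eq i := by simpa using (hπ.accept_eq (π.symm i)).symm
  pref_eq i := by simpa using (hπ.pref_eq (π.symm i)).symm

theorem isMatching_relabel (hπ : I.IsSymmetry π) (hμ : I.IsMatching μ) :
    I.IsMatching (relabel π μ) := by
  refine ⟨?_, ?_, ?_⟩
  · rintro ⟨i, h⟩ he
    have := hμ.1 _ (mem_relabel.1 he)
    rwa [hπ.symm.accept_eq] at this
  · rintro ⟨i, h⟩ he ⟨j, h'⟩ he' (rfl : i = j)
    have := hμ.2.1 _ (mem_relabel.1 he) _ (mem_relabel.1 he') rfl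
    simpa using this
  · rintro ⟨i, h⟩ he ⟨j, h'⟩ he' (rfl : h = h')
    have := hμ.2.2 _ (mem_relabel.1 he) _ (mem_relabel.1 he') rfl
    simpa using this

theorem card_relabel : (relabel π μ).card = μ.card := Finset.card_map _

theorem edgeRank_eq (hπ : I.IsSymmetry π) (i h : Fin n) :
    I.edgeRank (π i, h) = I.edgeRank (i, h) := by
  unfold edgeRank
  congr 2
  ext h'
  rw [Finset.mem_filter, Finset.mem_filter]
  simp only [strictPref, hπ.accept_eq, hπ.pref_eq]

theorem sig_relabel (hπ : I.IsSymmetry π) (r : ℕ) : I.sig (relabel π μ) r = I.sig μ r := by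
  unfold sig relabel
  rw [Finset.filter_map, Finset.card_map]
  congr 3
  ext ⟨i, h⟩
  simp [hπ.edgeRank_eq]

theorem unmatched_relabel {i : Fin n} :
    I.Unmatched (relabel π μ) i ↔ I.Unmatched μ (π.symm i) := by
  simp only [Unmatched, mem_relabel]

theorem weakImprove_relabel (hπ : I.IsSymmetry π) {i : Fin n} :
    I.WeakImprove (relabel π ν) (relabel π μ) i ↔ I.WeakImprove ν μ (π.symm i) := by
  simp only [WeakImprove, unmatched_relabel, mem_relabel, hπ.symm.pref_eq]

theorem strictImprove_relabel (hπ : I.IsSymmetry π) {i : Fin n} :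
    I.StrictImprove (relabel π ν) (relabel π μ) i ↔ I.StrictImprove ν μ (π.symm i) := by
  simp only [StrictImprove, unmatched_relabel, mem_relabel, strictPref, hπ.symm.pref_eq]

theorem relabel_symm_relabel : relabel π.symm (relabel π μ) = μ := by
  ext ⟨i, h⟩
  simp [mem_relabel]

theorem paretoOptimal_relabel (hπ : I.IsSymmetry π) (hμ : I.ParetoOptimal μ) :
    I.ParetoOptimal (relabel π μ) := by
  refine ⟨hπ.isMatching_relabel hμ.1, ?_⟩
  rintro ⟨ν, hν, hw, i, hs⟩
  refine hμ.2 ⟨relabel π.symm ν, hπ.symm.isMatching_relabel hν, fun j => ?_, π.symm i, ?_⟩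
  · rw [← relabel_symm_relabel (π := π) (μ := μ), hπ.symm.weakImprove_relabel]
    exact hw _
  · rw [← relabel_symm_relabel (π := π) (μ := μ), hπ.symm.strictImprove_relabel]
    simpa using hs

theorem satisfiesProp_relabel (hπ : I.IsSymmetry π) {X : MatchProp}
    (hμ : SatisfiesProp X I μ) : SatisfiesProp X I (relabel π μ) := by
  cases X with
  | po => exact hπ.paretoOptimal_relabel hμ
  | rm =>
    refine ⟨hπ.isMatching_relabel hμ.1, fun ν hν => ?_⟩
    simpa only [hπ.sig_relabel] using hμ.2 ν hν
  | mcrm =>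
    refine ⟨hπ.isMatching_relabel hμ.1, fun ν hν => ?_⟩
    simpa only [hπ.sig_relabel, card_relabel] using hμ.2 ν hν
  | fair =>
    refine ⟨hπ.isMatching_relabel hμ.1, fun ν hν => ?_⟩
    simpa only [hπ.sig_relabel, card_relabel] using hμ.2 ν hν

end IsSymmetry

end OSMInstance

/-- Swaps the agents `2 k` and `2 k + 1` whenever both are smaller than `n`. -/
def partner {n : ℕ} (i : Fin n) : Fin n :=
  if h : (i : ℕ) % 2 = 0 ∧ (i : ℕ) + 1 < n then ⟨i + 1, h.2⟩
  else if (i : ℕ) % 2 = 1 then ⟨i - 1, by omega⟩ else i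

theorem partner_val {n : ℕ} (i : Fin n) : (partner i : ℕ) =
    if (i : ℕ) % 2 = 0 ∧ (i : ℕ) + 1 < n then (i : ℕ) + 1
    else if (i : ℕ) % 2 = 1 then (i : ℕ) - 1 else i := by
  unfold partner
  split_ifs <;> rfl

theorem partner_div_two {n : ℕ} (i : Fin n) : (partner i : ℕ) / 2 = (i : ℕ) / 2 := by
  rw [partner_val]
  split_ifs <;> omega

theorem partner_partner {n : ℕ} (i : Fin n) : partner (partner i) = i := by
  apply Fin.ext
  have := i.isLt
  rw [partner_val (partner i), partner_val i]
  split_ifs <;> omega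

theorem partner_ne {n : ℕ} {i : Fin n} (h : (i : ℕ) / 2 < n / 2) : partner i ≠ i := by
  intro heq
  have := congrArg Fin.val heq
  rw [partner_val] at this
  split_ifs at this <;> omega

/-- `partner` as a permutation of the agents. -/
def partnerPerm (n : ℕ) : Equiv.Perm (Fin n) :=
  ⟨partner, partner, partner_partner, partner_partner⟩

/-- How much agent `i` of the hard instance likes object `j`: object `0` is everybody's
favourite, object `i / 2 + 1` is the second choice of `i`, the objects from `n / 2 + 2` on
are a common last resort, and all other objects (score `0`) are unacceptable. -/
def hardScore {n : ℕ} (i j : Fin n) : ℕ :=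
  if (j : ℕ) = 0 then 3 else if (j : ℕ) = i / 2 + 1 then 2
  else if n / 2 + 2 ≤ (j : ℕ) then 1 else 0

/-- The instance whose preferences are given by `hardScore`. -/
noncomputable def hardInstance (n : ℕ) : OSMInstance n where
  accept i := Finset.univ.filter fun j => hardScore i j ≠ 0
  accept_nonempty i := ⟨⟨0, i.pos⟩, Finset.mem_filter.2 ⟨Finset.mem_univ _, by simp [hardScore]⟩⟩
  pref i h h' := hardScore i h' ≤ hardScore i h
  pref_refl _ _ _ := le_rfl
  pref_trans _ _ _ _ _ _ _ h₁ h₂ := h₂.trans h₁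
  pref_total _ _ _ _ _ := le_total _ _

theorem mem_hardInstance_accept {n : ℕ} {i j : Fin n} :
    j ∈ (hardInstance n).accept i ↔ hardScore i j ≠ 0 := by
  simp [hardInstance]

theorem hardScore_congr {n : ℕ} {i i' : Fin n} (h : (i : ℕ) / 2 = i' / 2) (j : Fin n) :
    hardScore i j = hardScore i' j := by
  simp only [hardScore, h]

theorem hardInstance_isSymmetry (n : ℕ) : (hardInstance n).IsSymmetry (partnerPerm n) where
  accept_eq i := by
    ext j
    rw [mem_hardInstance_accept, mem_hardInstance_accept,
      hardScore_congr (i := partnerPerm n i) (partner_div_two i)]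
  pref_eq i := by
    funext h h'
    have := hardScore_congr (i := partnerPerm n i) (partner_div_two i)
    simp only [hardInstance, this]

/-- The number of last-resort objects of the hard instance. -/
def resortCount (n : ℕ) : ℕ := n - (n / 2 + 2)

/-- A scheme turning scores into values, strictly increasing on positive scores. -/
structure IsValueScheme (n : ℕ) (φ : ℕ → ℝ) : Prop where
  zero : φ 0 = 0
  one_nonneg : 0 ≤ φ 1
  one_lt_two : φ 1 < φ 2
  two_lt_three : φ 2 < φ 3
  sum_eq : φ 3 + φ 2 + resortCount n * φ 1 = 1

theorem hardScore_le {n : ℕ} (i j : Fin n) : hardScore i j ≤ 3 := by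
  unfold hardScore
  split_ifs <;> omega

theorem sum_hardScore {n : ℕ} (hn : 5 ≤ n) {φ : ℕ → ℝ} (hφ : IsValueScheme n φ) (i : Fin n) :
    ∑ j, φ (hardScore i j) = 1 := by
  have hi := i.isLt
  let z : Fin n := ⟨0, by omega⟩
  let o : Fin n := ⟨i / 2 + 1, by omega⟩
  have hpt : ∀ j : Fin n, φ (hardScore i j) = (if j = z then φ 3 else 0) +
      (if j = o then φ 2 else 0) + (if n / 2 + 2 ≤ (j : ℕ) then φ 1 else 0) := by
    intro j
    simp only [hardScore, z, o, Fin.ext_iff]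
    split_ifs <;> first | omega | simp [hφ.zero]
  have hcard : (Finset.univ.filter fun j : Fin n => n / 2 + 2 ≤ (j : ℕ)).card
      = resortCount n := by
    have : (Finset.univ.filter fun j : Fin n => n / 2 + 2 ≤ (j : ℕ)) =
        Finset.Ici (⟨n / 2 + 2, by omega⟩ : Fin n) := by
      ext j; simp [Fin.le_def]
    rw [this, Fin.card_Ici, resortCount]
  simp only [hpt, Finset.sum_add_distrib]
  rw [Finset.sum_ite_eq' , Finset.sum_ite_eq', ← Finset.sum_filter, Finset.sum_const, hcard]
  simpa using hφ.sum_eq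

theorem consistent_of_isValueScheme {n : ℕ} (hn : 5 ≤ n) {φ : Fin n → ℕ → ℝ}
    (hφ : ∀ i, IsValueScheme n (φ i)) :
    (hardInstance n).Consistent fun i j => φ i (hardScore i j) := by
  have hnonneg : ∀ i j : Fin n, 0 ≤ φ i (hardScore i j) := by
    intro i j
    have h1 := (hφ i).one_nonneg
    have h2 := (hφ i).one_lt_two
    have h3 := (hφ i).two_lt_three
    have h0 := (hφ i).zero
    have := hardScore_le i j
    interval_cases hardScore i j <;> linarith
  refine ⟨fun i j => ⟨hnonneg i j, ?_⟩, fun i j hj => ?_, fun i h h' hh hh' => ?_⟩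
  · rw [← sum_hardScore hn (hφ i) i]
    exact Finset.single_le_sum (f := fun j => φ i (hardScore i j)) (fun j _ => hnonneg i j)
      (Finset.mem_univ j)
  · rw [mem_hardInstance_accept, not_not] at hj
    simp only [hj, (hφ i).zero]
  · rw [mem_hardInstance_accept] at hh hh'
    change hardScore i h' ≤ hardScore i h ↔ φ i (hardScore i h') ≤ φ i (hardScore i h)
    have h2 := (hφ i).one_lt_two
    have h3 := (hφ i).two_lt_three
    have hle := hardScore_le i h
    have hle' := hardScore_le i h'
    generalize hardScore i h = a at *
    generalize hardScore i h' = b at *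
    interval_cases a <;> interval_cases b <;>
      first | contradiction | (simp only [le_refl]) | (norm_num; linarith)

theorem unitSum_of_isValueScheme {n : ℕ} (hn : 5 ≤ n) {φ : Fin n → ℕ → ℝ}
    (hφ : ∀ i, IsValueScheme n (φ i)) :
    (hardInstance n).UnitSum fun i j => φ i (hardScore i j) := by
  intro i
  rw [← sum_hardScore hn (hφ i) i]
  refine Finset.sum_subset (Finset.subset_univ _) fun j _ hj => ?_
  rw [mem_hardInstance_accept, not_not] at hj
  simp only [hj, (hφ i).zero]

/-- Nearly uniform values. -/
noncomputable def flatScheme (n : ℕ) (s : ℕ) : ℝ := s / (resortCount n + 5)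

/-- Nearly all value on the favourite object. -/
noncomputable def peakedScheme (n : ℕ) (s : ℕ) : ℝ :=
  if s = 3 then 1 - 1 / (n : ℝ) ^ 2 else if s = 2 then 1 / (n : ℝ) ^ 2 else 0

/-- Constant values for the first and second choice. -/
noncomputable def splitScheme (s : ℕ) : ℝ :=
  if s = 3 then 2 / 3 else if s = 2 then 1 / 3 else 0

theorem isValueScheme_flatScheme (n : ℕ) : IsValueScheme n (flatScheme n) where
  zero := by simp [flatScheme]
  one_nonneg := by unfold flatScheme; positivity
  one_lt_two := by unfold flatScheme; gcongr; norm_num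
  two_lt_three := by unfold flatScheme; gcongr; norm_num
  sum_eq := by
    unfold flatScheme
    push_cast
    field_simp
    ring

theorem isValueScheme_peakedScheme {n : ℕ} (hn : 2 ≤ n) : IsValueScheme n (peakedScheme n) where
  zero := by simp [peakedScheme]
  one_nonneg := by simp [peakedScheme]
  one_lt_two := by
    have : (0 : ℝ) < n := by exact_mod_cast (by omega : 0 < n)
    simpa [peakedScheme] using pow_pos this 2
  two_lt_three := by
    have h : (2 : ℝ) ≤ n := by exact_mod_cast hn
    have : 1 / (n : ℝ) ^ 2 ≤ 1 / 2 ^ 2 := by gcongr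
    simp only [peakedScheme]
    norm_num at this ⊢
    linarith
  sum_eq := by simp [peakedScheme]

theorem isValueScheme_splitScheme (n : ℕ) : IsValueScheme n splitScheme where
  zero := by simp [splitScheme]
  one_nonneg := by simp [splitScheme]
  one_lt_two := by norm_num [splitScheme]
  two_lt_three := by norm_num [splitScheme]
  sum_eq := by norm_num [splitScheme]

/-- The adversarial scheme of agent `i` against the matching `μ`: flat if `i` receives its
favourite object, peaked if it receives its second choice, and split otherwise. -/
noncomputable def adversary {n : ℕ} (μ : Finset (Fin n × Fin n)) (i : Fin n) : ℕ → ℝ :=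
  if ∃ j, (i, j) ∈ μ ∧ hardScore i j = 3 then flatScheme n
  else if ∃ j, (i, j) ∈ μ ∧ hardScore i j = 2 then peakedScheme n else splitScheme

theorem isValueScheme_adversary {n : ℕ} (hn : 2 ≤ n) (μ : Finset (Fin n × Fin n)) (i : Fin n) :
    IsValueScheme n (adversary μ i) := by
  unfold adversary
  split_ifs
  · exact isValueScheme_flatScheme n
  · exact isValueScheme_peakedScheme hn
  · exact isValueScheme_splitScheme n

theorem hardScore_eq_three {n : ℕ} {i j : Fin n} : hardScore i j = 3 ↔ (j : ℕ) = 0 := by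
  unfold hardScore
  split_ifs <;> simp_all

theorem hardScore_eq_two {n : ℕ} {i j : Fin n} : hardScore i j = 2 ↔ (j : ℕ) = i / 2 + 1 := by
  unfold hardScore
  split_ifs <;> first | omega | simp_all

theorem adversary_le {n : ℕ} {μ : Finset (Fin n × Fin n)} (hμ : (hardInstance n).IsMatching μ)
    {i j : Fin n} (h : (i, j) ∈ μ) : adversary μ i (hardScore i j) ≤
      (if (j : ℕ) = 0 then 3 / ((resortCount n : ℝ) + 5) else 0) + 1 / (n : ℝ) ^ 2 := by
  have huniq : ∀ j', (i, j') ∈ μ → j' = j := fun j' h' =>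
    congrArg Prod.snd (hμ.2.1 _ h' _ h rfl)
  have hex : ∀ s, (∃ j', (i, j') ∈ μ ∧ hardScore i j' = s) ↔ hardScore i j = s := by
    intro s
    constructor
    · rintro ⟨j', hj', hs⟩
      rwa [huniq j' hj'] at hs
    · exact fun hs => ⟨j, h, hs⟩
  have hpos : 0 ≤ 1 / (n : ℝ) ^ 2 := by positivity
  simp only [adversary, hex, ← hardScore_eq_three (i := i)]
  split_ifs with h3 h2
  · simp only [h3, flatScheme, Nat.cast_ofNat]
    linarith
  · simp [h2, peakedScheme]
  · simp only [splitScheme, h2, h3, if_false]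
    linarith

theorem SW_adversary_le {n : ℕ} (hn : 5 ≤ n) {μ : Finset (Fin n × Fin n)}
    (hμ : (hardInstance n).IsMatching μ) :
    (hardInstance n).SW (fun i j => adversary μ i (hardScore i j)) μ ≤ 7 / n := by
  have hR : n ≤ 2 * (resortCount n + 5) := by unfold resortCount; omega
  have hR' : (n : ℝ) ≤ 2 * ((resortCount n : ℝ) + 5) := by exact_mod_cast hR
  have hn0 : (0 : ℝ) < n := by exact_mod_cast (by omega : 0 < n)
  have hone : (μ.filter fun e => (e.2 : ℕ) = 0).card ≤ 1 := by
    rw [Finset.card_le_one]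
    intro e he e' he'
    simp only [Finset.mem_filter] at he he'
    exact hμ.2.2 e he.1 e' he'.1 (Fin.ext (he.2.trans he'.2.symm))
  calc _ ≤ ∑ e ∈ μ, ((if (e.2 : ℕ) = 0 then 3 / ((resortCount n : ℝ) + 5) else 0)
        + 1 / (n : ℝ) ^ 2) := Finset.sum_le_sum fun e he => adversary_le hμ he
    _ = ((μ.filter fun e => (e.2 : ℕ) = 0).card : ℝ) * (3 / ((resortCount n : ℝ) + 5))
        + (μ.card : ℝ) * (1 / (n : ℝ) ^ 2) := by
        rw [Finset.sum_add_distrib, ← Finset.sum_filter]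
        simp
    _ ≤ 1 * (3 / ((n : ℝ) / 2)) + n * (1 / (n : ℝ) ^ 2) := by
        gcongr
        · exact_mod_cast hone
        · linarith
        · exact hμ.card_le
    _ = 7 / n := by field_simp; norm_num

theorem exists_second_choice_edge {n : ℕ} {μ : Finset (Fin n × Fin n)}
    (hμ : (hardInstance n).ParetoOptimal μ) {i : Fin n} {o : Fin n}
    (ho : hardScore i o = 2) (hi : ∀ j, (i, j) ∈ μ → (j : ℕ) ≠ 0) :
    ∃ a : Fin n, (a, o) ∈ μ ∧ (a : ℕ) / 2 = i / 2 := by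
  have hval := hardScore_eq_two.1 ho
  have howner : ∃ a, (a, o) ∈ μ := by
    by_cases hio : (i, o) ∈ μ
    · exact ⟨i, hio⟩
    refine hμ.exists_owner (i := i) (mem_hardInstance_accept.2 (by omega)) fun j hj => ?_
    have hj3 : hardScore i j ≠ 3 := fun h => hi j hj (hardScore_eq_three.1 h)
    have hj2 : hardScore i j ≠ 2 := fun h => hio <| by
      rwa [Fin.ext ((hardScore_eq_two.1 h).trans hval.symm)] at hj
    have := hardScore_le i j
    change hardScore i j ≤ hardScore i o ∧ ¬ hardScore i o ≤ hardScore i j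
    omega
  obtain ⟨a, ha⟩ := howner
  refine ⟨a, ha, ?_⟩
  have hacc := mem_hardInstance_accept.1 (hμ.1.1 _ ha)
  have := i.isLt
  unfold hardScore at hacc
  dsimp only at hacc
  split_ifs at hacc <;> omega

theorem le_SW_relabel {n : ℕ} (hn : 5 ≤ n) {μ : Finset (Fin n × Fin n)}
    (hμ : (hardInstance n).ParetoOptimal μ) :
    ((n / 2 : ℕ) - 1 : ℝ) * (1 / 3) ≤ (hardInstance n).SW
      (fun i j => adversary μ i (hardScore i j)) (OSMInstance.relabel (partnerPerm n) μ) := by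
  set v : Fin n → Fin n → ℝ := fun i j => adversary μ i (hardScore i j) with hv
  have hcons := consistent_of_isValueScheme hn (isValueScheme_adversary (by omega) μ)
  set ν := OSMInstance.relabel (partnerPerm n) μ
  -- the pairs of agents that do not contain the agent holding the favourite object
  set K : Finset ℕ := (Finset.range (n / 2)).filter
    fun k => ∀ i j : Fin n, (i, j) ∈ μ → (j : ℕ) = 0 → (i : ℕ) / 2 ≠ k with hK
  have hKcard : n / 2 ≤ K.card + 1 := by
    obtain ⟨b, hb⟩ : ∃ b : ℕ, ∀ i j : Fin n, (i, j) ∈ μ → (j : ℕ) = 0 → (i : ℕ) / 2 = b := by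
      by_cases h : ∃ i j : Fin n, (i, j) ∈ μ ∧ (j : ℕ) = 0
      · obtain ⟨i, j, hij, hj⟩ := h
        refine ⟨i / 2, fun i' j' hij' hj' => ?_⟩
        have := hμ.1.2.2 _ hij' _ hij (Fin.ext (hj'.trans hj.symm))
        rw [(Prod.mk.inj this).1]
      · push Not at h
        exact ⟨0, fun i j hij hj => absurd hj (h i j hij)⟩
    have hsub : (Finset.range (n / 2)).erase b ⊆ K := by
      intro k hk
      rw [Finset.mem_erase] at hk
      refine Finset.mem_filter.2 ⟨hk.2, fun i j hij hj hik => hk.1 ?_⟩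
      rw [← hik, hb i j hij hj]
    have := Finset.card_le_card hsub
    have h2 := Finset.pred_card_le_card_erase (s := Finset.range (n / 2)) (a := b)
    rw [Finset.card_range] at h2
    omega
  have hT : K.card ≤ (ν.filter fun e => 1 / 3 ≤ v e.1 e.2).card := by
    refine Finset.card_le_card_of_surjOn (fun e => (e.2 : ℕ) - 1) ?_
    intro k hk
    obtain ⟨hk, hfav⟩ := Finset.mem_filter.1 (Finset.mem_coe.1 hk)
    rw [Finset.mem_range] at hk
    let i : Fin n := ⟨2 * k, by omega⟩
    let o : Fin n := ⟨k + 1, by omega⟩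
    have hdiv : (i : ℕ) / 2 = k := by simp [i]
    obtain ⟨a, ha, hak⟩ := exists_second_choice_edge hμ (i := i) (o := o)
      (hardScore_eq_two.2 (by simp [i, o])) (fun j hj hj0 => hfav i j hj hj0 hdiv)
    have hak' : (a : ℕ) / 2 = k := hak.trans hdiv
    have hpk : (partner a : ℕ) / 2 = k := (partner_div_two a).trans hak'
    have hne : partner a ≠ a := partner_ne (by omega)
    have hscore : hardScore (partner a) o = 2 := hardScore_eq_two.2 (by simp [o, hpk])
    have hval : v (partner a) o = 1 / 3 := by
      have h3 : ¬ ∃ j, (partner a, j) ∈ μ ∧ hardScore (partner a) j = 3 := by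
        rintro ⟨j, hj, hs⟩
        exact hfav _ j hj (hardScore_eq_three.1 hs) hpk
      have h2 : ¬ ∃ j, (partner a, j) ∈ μ ∧ hardScore (partner a) j = 2 := by
        rintro ⟨j, hj, hs⟩
        have hjo : j = o := Fin.ext <|
          (hardScore_eq_two.1 hs).trans (hardScore_eq_two.1 hscore).symm
        subst hjo
        exact hne (congrArg Prod.fst (hμ.1.2.2 _ hj _ ha rfl))
      simp only [hv, adversary, h3, h2, if_false, hscore, splitScheme]
      norm_num
    refine ⟨(partner a, o), ?_, by simp [o]⟩
    rw [Finset.mem_coe, Finset.mem_filter]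
    refine ⟨OSMInstance.mem_relabel.2 ?_, hval.ge⟩
    change (partner (partner a), o) ∈ μ
    rwa [partner_partner]
  have hlow : ((n / 2 : ℕ) : ℝ) - 1 ≤ (ν.filter fun e => 1 / 3 ≤ v e.1 e.2).card := by
    have : n / 2 ≤ (ν.filter fun e => 1 / 3 ≤ v e.1 e.2).card + 1 := by omega
    have : ((n / 2 : ℕ) : ℝ) ≤ (ν.filter fun e => 1 / 3 ≤ v e.1 e.2).card + 1 := by
      exact_mod_cast this
    linarith
  calc _ ≤ ((ν.filter fun e => 1 / 3 ≤ v e.1 e.2).card : ℝ) * (1 / 3) := by gcongr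
    _ ≤ ∑ e ∈ ν.filter (fun e => 1 / 3 ≤ v e.1 e.2), v e.1 e.2 := by
        rw [← nsmul_eq_mul]
        exact Finset.card_nsmul_le_sum _ _ _ fun e he => (Finset.mem_filter.1 he).2
    _ ≤ ∑ e ∈ ν, v e.1 e.2 := Finset.sum_le_sum_of_subset_of_nonneg
        (Finset.filter_subset _ _) fun e _ _ => (hcons.1 e.1 e.2).1

/-- (i) every deterministic ordinal algorithm that always outputs a
matching satisfying `X` loses a factor of `Ω(n²)` in welfare on some instance with
unit-sum valuations, and (ii) this is asymptotically tight: any matching satisfying `X`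
achieves an `n²`-approximation to the optimal welfare among matchings satisfying `X`. -/
theorem ordinal_unitSum_bounds (X : MatchProp) :
    (∃ c : ℝ, 0 < c ∧ ∃ n₀ : ℕ, ∀ n : ℕ, n₀ ≤ n →
      ∀ f : OSMInstance n → Finset (Fin n × Fin n),
        (∀ I : OSMInstance n, SatisfiesProp X I (f I)) →
        ∃ I : OSMInstance n, ∃ v : Fin n → Fin n → ℝ,
          I.Consistent v ∧ I.UnitSum v ∧
          ∃ μ', SatisfiesProp X I μ' ∧
            c * (n : ℝ) ^ 2 * I.SW v (f I) ≤ I.SW v μ') ∧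
    (∀ n : ℕ, 2 ≤ n → ∀ I : OSMInstance n,
      ∀ μ, SatisfiesProp X I μ →
      ∀ v : Fin n → Fin n → ℝ, I.Consistent v → I.UnitSum v →
      ∀ μ', SatisfiesProp X I μ' →
        I.SW v μ' ≤ (n : ℝ) ^ 2 * I.SW v μ) := by
  refine ⟨⟨1 / 84, by norm_num, 8, fun n hn f hf => ?_⟩, ?_⟩
  · set I := hardInstance n
    have hpo := (hf I).paretoOptimal
    have hφ := isValueScheme_adversary (n := n) (by omega) (f I)
    refine ⟨I, _, consistent_of_isValueScheme (by omega) hφ,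
      unitSum_of_isValueScheme (by omega) hφ, _,
      (hardInstance_isSymmetry n).satisfiesProp_relabel (hf I), ?_⟩
    refine le_trans ?_ (le_SW_relabel (by omega) hpo)
    have hn0 : (0 : ℝ) < n := by exact_mod_cast (by omega : 0 < n)
    have hhalf : (n : ℝ) ≤ 4 * ((n / 2 : ℕ) - 1 : ℝ) := by
      have : n + 4 ≤ 4 * (n / 2) := by omega
      have : (n : ℝ) + 4 ≤ 4 * (n / 2 : ℕ) := by exact_mod_cast this
      linarith
    calc _ ≤ 1 / 84 * (n : ℝ) ^ 2 * (7 / n) := by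
          gcongr
          exact SW_adversary_le (by omega) hpo.1
      _ = n / 12 := by field_simp; norm_num
      _ ≤ _ := by linarith
  · intro n hn I μ hμ v hv hu μ' hμ'
    have h1 := hμ.paretoOptimal.one_le_mul_SW (by omega) hv hu
    have h2 := OSMInstance.SW_le hμ'.paretoOptimal.1 hv
    calc I.SW v μ' ≤ n * 1 := by simpa using h2
      _ ≤ n * (n * I.SW v μ) := by gcongr
      _ = (n : ℝ) ^ 2 * I.SW v μ := by ring
end
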